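/- arXiv:1103.3936 — 2 statements merged into one kernel-verified Lean document; each statement's English description precedes it below -/
import Mathlib

section
/- Let O be a commutative Noetherian local ring with maximal ideal m. A bounded complex X of finitely generated O-modules is perfect (quasi-isomorphic to a bounded complex of finite rank free modules) if and only if there exists n₀ ∈ ℕ such that Hom_{D^b(O)}(X, (O/m)[n]) = 0 for all n ≥ n₀. -/
open CategoryTheory Limits

/-!
Write `k` for the residue field and let `E` have finitely generated homology, vanishing above
degree `b`. Lifting a basis of `k ⊗ H^b(E)` gives a map `p : F[-b] ⟶ E` with `F` finitely generated
free which is surjective on `H^b` by Nakayama and through which every map `F[-b] ⟶ k[-m]`, `m ≤ b`,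
factors. Hence the cone `D` of `p` has no homology above degree `b - 1`, and by the long exact
sequence of `Hom(-, k[*])` the vanishing of `Hom(E, k[-m])` for `m ≤ c` is inherited by `D`.
Once `b = c`, every map `F[-b] ⟶ k[-b]` vanishes because it factors through `E`, so `F = 0` and
`H^b(E) = 0`; descending, all homology vanishes. Hence the original `E` is an iterated extension of
finitely many shifted free modules.
-/

open DerivedCategory Pretriangulated ZeroObject

universe w v u

lemma forall_hom_eq_zero_congr {C : Type u} [Category.{v} C] [HasZeroMorphisms C] {X X' Y Y' : C}
    (e : X ≅ X') (e' : Y ≅ Y') : (∀ f : X ⟶ Y, f = 0) ↔ ∀ f : X' ⟶ Y', f = 0 := by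
  refine (e.homCongr e').forall_congr fun f => ?_
  rw [← cancel_epi e.inv, ← cancel_mono e'.hom]
  simp

section Pretriangulated

variable {C : Type u} [Category.{v} C] [Preadditive C] [HasZeroObject C] [HasShift C ℤ]
  [∀ n : ℤ, (shiftFunctor C n).Additive] [Pretriangulated C]

lemma eq_zero_of_distTriang_of_forall_exists_comp_eq {X Y Z W : C} {f : X ⟶ Y} {g : Y ⟶ Z}
    {h : Z ⟶ X⟦(1 : ℤ)⟧} (hT : Triangle.mk f g h ∈ distTriang C)
    (hf : ∀ v : X ⟶ W, ∃ w, f ≫ w = v) {z : Z ⟶ W⟦(1 : ℤ)⟧} (hz : g ≫ z = 0) : z = 0 := by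
  obtain ⟨y, rfl⟩ := Triangle.yoneda_exact₃ _ hT z hz
  obtain ⟨v, rfl⟩ := (shiftFunctor C (1 : ℤ)).map_surjective y
  obtain ⟨w, rfl⟩ := hf v
  have hhf : h ≫ f⟦1⟧' = 0 := comp_distTriang_mor_zero₃₁ _ hT
  change h ≫ (f ≫ w)⟦1⟧' = 0
  rw [Functor.map_comp, reassoc_of% hhf, zero_comp]

end Pretriangulated

section Abelian

variable {C : Type u} [Category.{v} C] [Abelian C] [HasDerivedCategory.{w} C]

lemma Q_map_surjective_of_isKProjective (K L : CochainComplex C ℤ) [K.IsKProjective] :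
    Function.Surjective (Q.map : (K ⟶ L) → (Q.obj K ⟶ Q.obj L)) := by
  intro f
  obtain ⟨g, hg⟩ := (CochainComplex.IsKProjective.Qh_map_bijective K _).surjective
    ((quotientCompQhIso C).hom.app K ≫ f ≫ (quotientCompQhIso C).inv.app L)
  obtain ⟨g, rfl⟩ := (HomotopyCategory.quotient _ _).map_surjective g
  refine ⟨g, ?_⟩
  rw [← cancel_epi ((quotientCompQhIso C).hom.app K), ← quotientCompQhIso_hom_naturality, hg]
  simp

lemma Q_hom_eq_zero_of_isKProjective {K L : CochainComplex C ℤ} [K.IsKProjective]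
    (h : ∀ n, IsZero (K.X n) ∨ IsZero (L.X n)) (f : Q.obj K ⟶ Q.obj L) : f = 0 := by
  obtain ⟨f, rfl⟩ := Q_map_surjective_of_isKProjective K L f
  have hf : f = 0 := by
    ext n
    exact (h n).elim (fun hK => hK.eq_of_src _ _) fun hL => hL.eq_of_tgt _ _
  rw [hf, Functor.map_zero]

instance isKProjective_single (P : C) [Projective P] (n : ℤ) :
    ((CochainComplex.singleFunctor C n).obj P).IsKProjective := by
  have (i : ℤ) : Projective (((CochainComplex.singleFunctor C n).obj P).X i) := by
    by_cases hi : i = n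
    · exact Projective.of_iso
        (HomologicalComplex.singleObjXIsoOfEq (ComplexShape.up ℤ) n P i hi).symm ‹_›
    · exact (HomologicalComplex.isZero_single_obj_X (ComplexShape.up ℤ) n P i hi).projective
  exact CochainComplex.isKProjective_of_projective _ n

lemma singleFunctor_hom_eq_zero_of_isLE (P : C) [Projective P] {a b : ℤ} (hab : a < b)
    {E : DerivedCategory C} [E.IsLE a] (f : (singleFunctor C b).obj P ⟶ E) : f = 0 := by
  obtain ⟨K, _, ⟨e⟩⟩ := E.exists_iso_Q_obj_of_isLE a
  refine (forall_hom_eq_zero_congr (Iso.refl _) e).2 (fun g => ?_) f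
  refine Q_hom_eq_zero_of_isKProjective (K := (CochainComplex.singleFunctor C b).obj P)
    (fun n => ?_) g
  obtain hn | rfl := ne_or_eq n b
  · exact .inl (HomologicalComplex.isZero_single_obj_X (ComplexShape.up ℤ) b P n hn)
  · exact .inr (K.isZero_of_isStrictlyLE a n hab)

lemma exists_distTriang_singleFunctor (E : DerivedCategory C) (b : ℤ) [E.IsLE b] :
    ∃ (A : DerivedCategory C) (M : C) (f : A ⟶ E) (g : E ⟶ (singleFunctor C b).obj M)
      (h : (singleFunctor C b).obj M ⟶ A⟦(1 : ℤ)⟧),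
      A.IsLE (b - 1) ∧ Triangle.mk f g h ∈ distTriang (DerivedCategory C) := by
  let T := (TStructure.t.triangleLTGE b).obj E
  have : T.obj₃.IsLE b := inferInstanceAs (TStructure.t.IsLE ((TStructure.t.truncGE b).obj E) b)
  obtain ⟨M, ⟨e⟩⟩ := exists_iso_singleFunctor_obj_of_isGE_of_isLE T.obj₃ b
  refine ⟨T.obj₁, M, T.mor₁, T.mor₂ ≫ e.hom, e.inv ≫ T.mor₃, inferInstance, ?_⟩
  exact isomorphic_distinguished T (TStructure.t.triangleLTGE_distinguished b E) _
    (Triangle.isoMk _ _ (Iso.refl _) (Iso.refl _) e.symm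
      ((Category.comp_id T.mor₁).trans (Category.id_comp T.mor₁).symm)
      (by change (T.mor₂ ≫ e.hom) ≫ e.inv = 𝟙 T.obj₂ ≫ T.mor₂; simp)
      (by change (e.inv ≫ T.mor₃) ≫ (𝟙 T.obj₁)⟦(1 : ℤ)⟧' = e.inv ≫ T.mor₃; simp))

lemma isIso_homologyFunctor_map_of_distTriang {A E F : DerivedCategory C} {f : A ⟶ E} {g : E ⟶ F}
    {h : F ⟶ A⟦(1 : ℤ)⟧} (hT : Triangle.mk f g h ∈ distTriang (DerivedCategory C)) (b : ℤ)
    [A.IsLE (b - 1)] : IsIso ((homologyFunctor C b).map g) := by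
  have : Mono ((homologyFunctor C b).map g) :=
    (HomologySequence.mono_homologyMap_mor₂_iff _ hT b).2
      ((A.isZero_of_isLE (b - 1) b (by lia)).eq_of_src _ _)
  have : Epi ((homologyFunctor C b).map g) :=
    (HomologySequence.epi_homologyMap_mor₂_iff _ hT b (b + 1)).2
      ((A.isZero_of_isLE (b - 1) (b + 1) (by lia)).eq_of_tgt _ _)
  exact isIso_of_mono_of_epi _

lemma exists_hom_singleFunctor_isIso_homology_and_lift (E : DerivedCategory C) (b : ℤ)
    [E.IsLE b] :
    ∃ (M : C) (q : E ⟶ (singleFunctor C b).obj M), IsIso ((homologyFunctor C b).map q) ∧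
      ∀ (P : C) [Projective P] (g : P ⟶ M),
        ∃ p : (singleFunctor C b).obj P ⟶ E, p ≫ q = (singleFunctor C b).map g := by
  obtain ⟨A, M, f, q, h, _, hT⟩ := exists_distTriang_singleFunctor E b
  refine ⟨M, q, isIso_homologyFunctor_map_of_distTriang hT b, fun P _ g => ?_⟩
  have : (A⟦(1 : ℤ)⟧).IsLE (b - 2) := TStructure.t.isLE_shift A (b - 1) 1 (b - 2) (by lia)
  have hgh : (singleFunctor C b).map g ≫ h = 0 :=
    singleFunctor_hom_eq_zero_of_isLE P (a := b - 2) (by lia) _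
  obtain ⟨p, hp⟩ := Triangle.coyoneda_exact₃ _ hT _ hgh
  exact ⟨p, hp.symm⟩

lemma isLE_sub_one_of_isZero_homology {E : DerivedCategory C} {b : ℤ} [E.IsLE b]
    (hE : IsZero ((homologyFunctor C b).obj E)) : E.IsLE (b - 1) := by
  refine (isLE_iff E (b - 1)).2 fun i hi => ?_
  obtain rfl | hi : i = b ∨ b < i := by lia
  · exact hE
  · exact E.isZero_of_isLE b i hi

lemma isLE_of_distTriang_of_epi_homologyFunctor_map {A E F : DerivedCategory C} {f : A ⟶ E}
    {g : E ⟶ F} {h : F ⟶ A⟦(1 : ℤ)⟧} (hT : Triangle.mk f g h ∈ distTriang (DerivedCategory C))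
    (b : ℤ) [A.IsLE (b + 1)] [E.IsLE (b + 1)] [Epi ((homologyFunctor C (b + 1)).map f)] :
    F.IsLE b := by
  refine (isLE_iff F b).2 fun i hi => ?_
  refine (HomologySequence.exact₃ _ hT i (i + 1)).isZero_X₂ ?_
    ((A.isZero_of_isLE (b + 1) (i + 1) (by lia)).eq_of_tgt _ _)
  obtain rfl | hi : i = b + 1 ∨ b + 1 < i := by lia
  · exact (HomologySequence.epi_homologyMap_mor₁_iff _ hT (b + 1)).1 ‹_›
  · exact (E.isZero_of_isLE (b + 1) i hi).eq_of_src _ _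

lemma isZero_of_forall_isLE {E : DerivedCategory C} (hE : ∀ n : ℤ, E.IsLE n) : IsZero E := by
  have hH (n : ℤ) : IsZero ((homologyFunctor C n).obj E) := E.isZero_of_isLE (n - 1) n (by lia)
  have : IsIso (0 : E ⟶ 0) := (DerivedCategory.isIso_iff C _).2 fun n =>
    (hH n).isIso ((homologyFunctor C n).map_isZero (isZero_zero _)) _
  exact (isZero_zero _).of_iso (asIso (0 : E ⟶ 0))

/-- `M` in degree `b` shifted by `n` is `M` in degree `b - n`. -/
noncomputable def singleFunctorShiftIso (M : C) {a n b : ℤ} (h : n + a = b) :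
    ((singleFunctor C b).obj M)⟦n⟧ ≅ (singleFunctor C a).obj M :=
  ((singleFunctors C).shiftIso n a b h).app M

end Abelian

section Module

open IsLocalRing TensorProduct

lemma exists_surjective_pi_forall_exists_comp_eq (R M : Type*) [CommRing R] [IsLocalRing R]
    [AddCommGroup M] [Module R M] [Module.Finite R M] :
    ∃ (n : ℕ) (g : (Fin n → R) →ₗ[R] M), Function.Surjective g ∧
      ∀ ψ : (Fin n → R) →ₗ[R] ResidueField R, ∃ φ : M →ₗ[R] ResidueField R, φ ∘ₗ g = ψ := by
  let B := Module.finBasis (ResidueField R) (ResidueField R ⊗[R] M)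
  choose v hv using fun i =>
    TensorProduct.mk_surjective R M (ResidueField R) Ideal.Quotient.mk_surjective (B i)
  refine ⟨_, Fintype.linearCombination R v, ?_, fun ψ => ?_⟩
  · rw [← LinearMap.range_eq_top, Fintype.range_linearCombination]
    exact span_eq_top_of_tmul_eq_basis v B hv
  · refine ⟨(B.constr (ResidueField R) fun i => ψ (Pi.single i 1)).restrictScalars R ∘ₗ
      TensorProduct.mk R (ResidueField R) M 1, (Pi.basisFun R _).ext fun i => ?_⟩
    simp only [TensorProduct.mk_apply] at hv
    simp [Fintype.linearCombination_apply_single, hv]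

lemma eq_zero_of_forall_pi_residueField_eq_zero {R : Type*} [CommRing R] [IsLocalRing R] {n : ℕ}
    (h : ∀ φ : (Fin n → R) →ₗ[R] ResidueField R, φ = 0) : n = 0 := by
  by_contra hn
  have : NeZero n := ⟨hn⟩
  have := LinearMap.congr_fun (h (Algebra.linearMap R (ResidueField R) ∘ₗ LinearMap.proj 0)) 1
  simp at this

end Module

section Perfect

variable {R : Type u} [Ring R]

/-- Bounded complexes of finitely generated free modules, the strictly perfect complexes
over a local ring. -/
def IsBoundedFiniteFree (Y : CochainComplex (ModuleCat.{u} R) ℤ) : Prop :=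
  (∃ a b : ℤ, ∀ n : ℤ, (n < a ∨ b < n) → IsZero (Y.X n)) ∧
    ∀ n : ℤ, Module.Finite R (Y.X n) ∧ Module.Free R (Y.X n)

namespace IsBoundedFiniteFree

variable {Y Z : CochainComplex (ModuleCat.{u} R) ℤ}

lemma isKProjective (hY : IsBoundedFiniteFree Y) : Y.IsKProjective := by
  obtain ⟨⟨a, b, hab⟩, hfree⟩ := hY
  have : Y.IsStrictlyLE b := (Y.isStrictlyLE_iff b).2 fun n hn => hab n (.inr hn)
  have (n : ℤ) : Projective (Y.X n) :=
    have := (hfree n).2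
    ModuleCat.projective_of_free (Module.Free.chooseBasis R (Y.X n))
  exact CochainComplex.isKProjective_of_projective Y b

lemma of_isZero (hY : ∀ n, IsZero (Y.X n)) : IsBoundedFiniteFree Y := by
  refine ⟨⟨0, 0, fun n _ => hY n⟩, fun n => ?_⟩
  have := ModuleCat.subsingleton_of_isZero (hY n)
  exact ⟨inferInstance, inferInstance⟩

lemma shift (hY : IsBoundedFiniteFree Y) (k : ℤ) : IsBoundedFiniteFree (Y⟦k⟧) := by
  obtain ⟨⟨a, b, hab⟩, hfree⟩ := hY
  exact ⟨⟨a - k, b - k, fun n hn => hab (n + k) (by lia)⟩, fun n => hfree (n + k)⟩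

lemma mappingCone (hY : IsBoundedFiniteFree Y) (hZ : IsBoundedFiniteFree Z) (f : Y ⟶ Z) :
    IsBoundedFiniteFree (CochainComplex.mappingCone f) := by
  obtain ⟨⟨a, b, hab⟩, hY⟩ := hY
  obtain ⟨⟨a', b', hab'⟩, hZ⟩ := hZ
  refine ⟨⟨min (a - 1) a', max b b', fun n hn => ?_⟩, fun n => ?_⟩
  · rw [CochainComplex.mappingCone.isZero_X_iff]
    exact ⟨hab _ (by lia), hab' _ (by lia)⟩
  · let e := (HomologicalComplex.homotopyCofiber.XIsoBiprod f n (n + 1) rfl ≪≫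
      ModuleCat.biprodIsoProd _ _).toLinearEquiv
    obtain ⟨_, _⟩ := hY (n + 1)
    obtain ⟨_, _⟩ := hZ n
    exact ⟨Module.Finite.equiv e.symm, Module.Free.of_equiv e.symm⟩

lemma single (F : ModuleCat.{u} R) [Module.Finite R F] [Module.Free R F] (b : ℤ) :
    IsBoundedFiniteFree ((CochainComplex.singleFunctor (ModuleCat.{u} R) b).obj F) := by
  have hzero (n : ℤ) (hn : n ≠ b) :=
    HomologicalComplex.isZero_single_obj_X (ComplexShape.up ℤ) b F n hn
  refine ⟨⟨b, b, fun n hn => hzero n (by lia)⟩, fun n => ?_⟩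
  obtain rfl | hn := eq_or_ne n b
  · let e := (HomologicalComplex.singleObjXSelf (ComplexShape.up ℤ) n F).toLinearEquiv
    exact ⟨Module.Finite.equiv e.symm, Module.Free.of_equiv e.symm⟩
  · have : Subsingleton (((CochainComplex.singleFunctor (ModuleCat.{u} R) b).obj F).X n) :=
      ModuleCat.subsingleton_of_isZero (hzero n hn)
    exact ⟨inferInstance, inferInstance⟩

end IsBoundedFiniteFree

variable [HasDerivedCategory.{w} (ModuleCat.{u} R)]

/-- Perfect objects of the derived category. Bounded complexes of finitely generated free
modules are used instead of projective ones, which is the same over a local ring. -/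
def IsPerfect (E : DerivedCategory (ModuleCat.{u} R)) : Prop :=
  ∃ Y : CochainComplex (ModuleCat.{u} R) ℤ, IsBoundedFiniteFree Y ∧ Nonempty (E ≅ Q.obj Y)

namespace IsPerfect

variable {E : DerivedCategory (ModuleCat.{u} R)}

lemma of_isZero (hE : IsZero E) : IsPerfect E :=
  ⟨0, .of_isZero fun n => (HomologicalComplex.eval _ _ n).map_isZero (isZero_zero _),
    ⟨hE.iso (Q.map_isZero (isZero_zero _))⟩⟩

lemma single (F : ModuleCat.{u} R) [Module.Finite R F] [Module.Free R F] (b : ℤ) :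
    IsPerfect ((singleFunctor (ModuleCat.{u} R) b).obj F) :=
  ⟨_, .single F b, ⟨Iso.refl _⟩⟩

lemma shift (hE : IsPerfect E) (k : ℤ) : IsPerfect (E⟦k⟧) := by
  obtain ⟨Y, hY, ⟨e⟩⟩ := hE
  exact ⟨_, hY.shift k, ⟨(shiftFunctor _ k).mapIso e ≪≫ (Q.commShiftIso k).symm.app Y⟩⟩

lemma of_distTriang₃ {T : Triangle (DerivedCategory (ModuleCat.{u} R))} (hT : T ∈ distTriang _)
    (h₁ : IsPerfect T.obj₁) (h₂ : IsPerfect T.obj₂) : IsPerfect T.obj₃ := by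
  obtain ⟨Y, hY, ⟨e⟩⟩ := h₁
  obtain ⟨Z, hZ, ⟨e'⟩⟩ := h₂
  have := hY.isKProjective
  obtain ⟨φ, hφ⟩ := Q_map_surjective_of_isKProjective Y Z (e.inv ≫ T.mor₁ ≫ e'.hom)
  have comm : T.mor₁ ≫ e'.hom = e.hom ≫ Q.map φ := by rw [hφ, e.hom_inv_id_assoc]
  exact ⟨_, hY.mappingCone hZ φ, ⟨Triangle.π₃.mapIso (isoTriangleOfIso₁₂ _ _ hT
    (DerivedCategory.mappingCone_triangle_distinguished φ) e e' comm)⟩⟩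

lemma of_distTriang₂ {T : Triangle (DerivedCategory (ModuleCat.{u} R))} (hT : T ∈ distTriang _)
    (h₁ : IsPerfect T.obj₁) (h₃ : IsPerfect T.obj₃) : IsPerfect T.obj₂ :=
  of_distTriang₃ (inv_rot_of_distTriang T hT) (h₃.shift (-1)) h₁

lemma exists_forall_hom_shift_eq_zero (hE : IsPerfect E) (M : ModuleCat.{u} R) :
    ∃ n₀ : ℕ, ∀ n : ℕ, n₀ ≤ n →
      ∀ f : E ⟶ ((singleFunctor (ModuleCat.{u} R) 0).obj M)⟦(n : ℤ)⟧, f = 0 := by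
  obtain ⟨Y, hY, ⟨e⟩⟩ := hE
  have := hY.isKProjective
  obtain ⟨⟨a, b, hab⟩, -⟩ := hY
  refine ⟨(1 - a).toNat, fun n hn => ?_⟩
  refine (forall_hom_eq_zero_congr e (singleFunctorShiftIso M (add_neg_cancel (n : ℤ)))).2
    fun f => ?_
  refine Q_hom_eq_zero_of_isKProjective
    (L := (CochainComplex.singleFunctor (ModuleCat.{u} R) (-n)).obj M) (fun i => ?_) f
  obtain hi | rfl := ne_or_eq i (-n)
  · exact .inr (HomologicalComplex.isZero_single_obj_X (ComplexShape.up ℤ) (-n : ℤ) M i hi)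
  · exact .inl (hab _ (by lia))

end IsPerfect

/-- Objects of `D(R)` all of whose homology modules are finitely generated. -/
def HasFiniteHomology (E : DerivedCategory (ModuleCat.{u} R)) : Prop :=
  ∀ n : ℤ, Module.Finite R ((homologyFunctor (ModuleCat.{u} R) n).obj E)

namespace HasFiniteHomology

variable [IsNoetherianRing R]

lemma of_finite {X : CochainComplex (ModuleCat.{u} R) ℤ} (hX : ∀ n, Module.Finite R (X.X n)) :
    HasFiniteHomology (Q.obj X) := by
  intro n
  have := hX n
  have : Module.Finite R (X.cycles n) :=
    .of_injective (X.iCycles n).hom ((ModuleCat.mono_iff_injective _).1 inferInstance)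
  have : Module.Finite R (X.homology n) :=
    .of_surjective (X.homologyπ n).hom ((ModuleCat.epi_iff_surjective _).1 inferInstance)
  let e : X.homology n ≅ (homologyFunctor (ModuleCat.{u} R) n).obj (Q.obj X) :=
    ((homologyFunctorFactors (ModuleCat.{u} R) n).app X).symm
  exact .equiv e.toLinearEquiv

lemma of_distTriang₃ {T : Triangle (DerivedCategory (ModuleCat.{u} R))} (hT : T ∈ distTriang _)
    (h₁ : HasFiniteHomology T.obj₁) (h₂ : HasFiniteHomology T.obj₂) :
    HasFiniteHomology T.obj₃ := by
  intro n
  have hex := (ShortComplex.ShortExact.moduleCat_exact_iff_function_exact _).1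
    (HomologySequence.exact₃ T hT n (n + 1))
  have := h₁ (n + 1)
  have := h₂ n
  have := isNoetherian_of_range_eq_ker _ _ hex.linearMap_ker_eq.symm
  exact inferInstance

end HasFiniteHomology

end Perfect

section MinimalCover

open IsLocalRing

/-- The residue field of `R` as an object of `D(R)`, placed in cohomological degree `n`. -/
noncomputable abbrev residueFieldSingle (R : Type u) [CommRing R] [IsLocalRing R]
    [HasDerivedCategory.{w} (ModuleCat.{u} R)] (n : ℤ) : DerivedCategory (ModuleCat.{u} R) :=
  (singleFunctor (ModuleCat.{u} R) n).obj (ModuleCat.of R (ResidueField R))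

variable {R : Type u} [CommRing R] [IsLocalRing R] [HasDerivedCategory.{w} (ModuleCat.{u} R)]
  {E : DerivedCategory (ModuleCat.{u} R)}

lemma exists_minimal_cover (E : DerivedCategory (ModuleCat.{u} R)) (b : ℤ) [E.IsLE b]
    [Module.Finite R ((homologyFunctor (ModuleCat.{u} R) b).obj E)] :
    ∃ (n : ℕ) (p : (singleFunctor (ModuleCat.{u} R) b).obj (ModuleCat.of R (Fin n → R)) ⟶ E),
      Epi ((homologyFunctor (ModuleCat.{u} R) b).map p) ∧
        ∀ m ≤ b, ∀ v : _ ⟶ residueFieldSingle R m, ∃ w, p ≫ w = v := by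
  let H := homologyFunctor (ModuleCat.{u} R) b
  let S := singleFunctor (ModuleCat.{u} R) b
  let e : S ⋙ H ≅ 𝟭 _ := singleFunctorCompHomologyFunctorIso (ModuleCat.{u} R) b
  obtain ⟨M, q, hq, hlift⟩ := exists_hom_singleFunctor_isIso_homology_and_lift E b
  have : Module.Finite R M := .equiv (asIso (H.map q) ≪≫ e.app M).toLinearEquiv
  obtain ⟨n, g, hg, hgk⟩ := exists_surjective_pi_forall_exists_comp_eq R M
  have : Projective (ModuleCat.of R (Fin n → R)) :=
    ModuleCat.projective_of_free (Pi.basisFun R (Fin n))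
  obtain ⟨p, hp⟩ := hlift _ (ModuleCat.ofHom g)
  refine ⟨n, p, ?_, fun m hm v => ?_⟩
  · have : Epi (ModuleCat.ofHom g) := (ModuleCat.epi_iff_surjective _).2 hg
    have hHp : H.map p = (e.hom.app _ ≫ ModuleCat.ofHom g ≫ e.inv.app M) ≫ inv (H.map q) := by
      rw [IsIso.eq_comp_inv, ← H.map_comp, hp, ← Functor.comp_map]
      exact (NatIso.naturality_2 e (ModuleCat.ofHom g)).symm
    rw [hHp]
    infer_instance
  · obtain rfl | hm := hm.eq_or_lt
    · obtain ⟨ψ, rfl⟩ := S.map_surjective v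
      obtain ⟨φ, hφ⟩ := hgk ψ.hom
      refine ⟨q ≫ S.map (ModuleCat.ofHom φ), ?_⟩
      rw [reassoc_of% hp, ← Functor.map_comp, ← ModuleCat.ofHom_comp, hφ, ModuleCat.ofHom_hom]
    · exact ⟨0, by rw [comp_zero, singleFunctor_hom_eq_zero_of_isLE _ hm v]⟩

lemma isLE_sub_one_of_forall_hom_residueFieldSingle_eq_zero {b : ℤ} [E.IsLE b]
    [Module.Finite R ((homologyFunctor (ModuleCat.{u} R) b).obj E)]
    (hE : ∀ f : E ⟶ residueFieldSingle R b, f = 0) : E.IsLE (b - 1) := by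
  obtain ⟨n, p, _, hp⟩ := exists_minimal_cover E b
  have hn : n = 0 := eq_zero_of_forall_pi_residueField_eq_zero (R := R) fun φ => by
    obtain ⟨w, hw⟩ := hp b le_rfl ((singleFunctor (ModuleCat.{u} R) b).map (ModuleCat.ofHom φ))
    rw [hE w, comp_zero, eq_comm, Functor.map_eq_zero_iff] at hw
    exact congrArg ModuleCat.Hom.hom hw
  subst hn
  have hzero : IsZero (ModuleCat.of R (Fin 0 → R)) := ModuleCat.isZero_of_subsingleton _
  exact isLE_sub_one_of_isZero_homology
    (IsZero.of_epi ((homologyFunctor (ModuleCat.{u} R) b).map p)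
      (Functor.map_isZero _ (Functor.map_isZero _ hzero)))

lemma isZero_of_forall_hom_residueFieldSingle_eq_zero {c : ℤ} [E.IsLE c]
    (hfin : HasFiniteHomology E) (hE : ∀ m ≤ c, ∀ f : E ⟶ residueFieldSingle R m, f = 0) :
    IsZero E := by
  have hLE (n : ℤ) (hn : n ≤ c) : E.IsLE n := by
    induction n, hn using Int.leInductionDown with
    | base => infer_instance
    | pred n hn ih =>
      have := hfin n
      exact isLE_sub_one_of_forall_hom_residueFieldSingle_eq_zero (hE n hn)
  refine isZero_of_forall_isLE fun n => ?_
  have := hLE (min n c) (min_le_right n c)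
  exact TStructure.t.isLE_of_le E (min n c) n

lemma isPerfect_of_forall_hom_residueFieldSingle_eq_zero [IsNoetherianRing R] {b c : ℤ}
    (hbc : c ≤ b) [E.IsLE b] (hfin : HasFiniteHomology E)
    (hE : ∀ m ≤ c, ∀ f : E ⟶ residueFieldSingle R m, f = 0) : IsPerfect E := by
  induction b, hbc using Int.leInduction generalizing E with
  | base => exact .of_isZero (isZero_of_forall_hom_residueFieldSingle_eq_zero hfin hE)
  | succ b hb ih =>
    have := hfin (b + 1)
    obtain ⟨n, p, _, hp⟩ := exists_minimal_cover E (b + 1)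
    obtain ⟨D, i, δ, hT⟩ := distinguished_cocone_triangle p
    have hD : D.IsLE b := isLE_of_distTriang_of_epi_homologyFunctor_map hT b
    have hDfin : HasFiniteHomology D :=
      .of_distTriang₃ hT (.of_finite fun j => ((IsBoundedFiniteFree.single _ _).2 j).1) hfin
    have hDk (m : ℤ) (hm : m ≤ c) (f : D ⟶ residueFieldSingle R m) : f = 0 := by
      let e : (residueFieldSingle R (m + 1))⟦(1 : ℤ)⟧ ≅ residueFieldSingle R m :=
        singleFunctorShiftIso _ (add_comm 1 m)
      refine (forall_hom_eq_zero_congr (Iso.refl D) e).1 (fun f => ?_) f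
      exact eq_zero_of_distTriang_of_forall_exists_comp_eq hT (hp (m + 1) (by lia))
        ((forall_hom_eq_zero_congr (Iso.refl E) e).2 (hE m hm) _)
    exact .of_distTriang₂ hT (.single _ _) (ih (E := D) hDfin hDk)

end MinimalCover

theorem stmt2_general {O : Type u} [CommRing O] [IsNoetherianRing O] [IsLocalRing O]
    [HasDerivedCategory.{w} (ModuleCat.{u} O)] (E : DerivedCategory (ModuleCat.{u} O)) (b : ℤ)
    [E.IsLE b] (hE : HasFiniteHomology E) :
    IsPerfect E ↔ ∃ n₀ : ℕ, ∀ n : ℕ, n₀ ≤ n →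
      ∀ f : E ⟶ (residueFieldSingle O 0)⟦(n : ℤ)⟧, f = 0 := by
  refine ⟨fun h => h.exists_forall_hom_shift_eq_zero _, fun ⟨n₀, hn₀⟩ => ?_⟩
  have := TStructure.t.isLE_of_le E b (max b (-n₀)) (le_max_left _ _)
  refine isPerfect_of_forall_hom_residueFieldSingle_eq_zero (le_max_right b (-n₀)) hE
    fun m hm => ?_
  obtain ⟨n, rfl⟩ : ∃ n : ℕ, m = -n := ⟨(-m).toNat, by lia⟩
  exact (forall_hom_eq_zero_congr (Iso.refl E) (singleFunctorShiftIso _ (add_neg_cancel _))).1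
    (hn₀ n (by lia))

/-- Let `O` be a commutative Noetherian local ring with maximal ideal `m`.
A bounded complex `X` of finitely generated `O`-modules is perfect (isomorphic in the derived
category to a bounded complex of finite rank free modules) if and only if there exists `n₀ ∈ ℕ`
such that `Hom_{D(O)}(X, (O/m)[n]) = 0` for all `n ≥ n₀`. -/
theorem stmt2 (O : Type) [CommRing O] [IsNoetherianRing O] [IsLocalRing O]
    [HasDerivedCategory (ModuleCat O)]
    (X : CochainComplex (ModuleCat O) ℤ)
    (hXbdd : ∃ a b : ℤ, ∀ n : ℤ, (n < a ∨ b < n) → IsZero (X.X n))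
    (hXfg : ∀ n : ℤ, Module.Finite O (X.X n)) :
    (∃ Y : CochainComplex (ModuleCat O) ℤ,
        (∃ a b : ℤ, ∀ n : ℤ, (n < a ∨ b < n) → IsZero (Y.X n)) ∧
        (∀ n : ℤ, Module.Finite O (Y.X n) ∧ Module.Free O (Y.X n)) ∧
        Nonempty (DerivedCategory.Q.obj X ≅ DerivedCategory.Q.obj Y)) ↔
      (∃ n₀ : ℕ, ∀ n : ℕ, n₀ ≤ n →
        ∀ f : DerivedCategory.Q.obj X ⟶
          ((DerivedCategory.singleFunctor (ModuleCat O) 0).obj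
            (ModuleCat.of O (IsLocalRing.ResidueField O)))⟦(n : ℤ)⟧, f = 0) := by
  obtain ⟨a, b, hab⟩ := hXbdd
  have : X.IsStrictlyLE b := (X.isStrictlyLE_iff b).2 fun n hn => hab n (.inr hn)
  simpa only [IsPerfect, IsBoundedFiniteFree, and_assoc] using
    stmt2_general (Q.obj X) b (.of_finite hXfg)
end

section
/- Let A be an abelian category and S : D^b(A) → D^b(A) a triangle equivalence. Suppose X₁, X₂ are objects of D^b(A) and m₁, m₂, n₁, n₂ ∈ ℤ satisfy S^{m₁}X₁ ≅ X₁[n₁], S^{m₂}X₂ ≅ X₂[n₂], and d = m₁n₂ − m₂n₁ ≠ 0. Then Hom_{D^b(A)}(X₁, X₂) = 0 and Hom_{D^b(A)}(X₂, X₁) = 0. -/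
open CategoryTheory Limits

/-- Natural number powers of a self-equivalence. -/
def npowEquiv {C : Type*} [Category C] (E : C ≌ C) : ℕ → (C ≌ C)
  | 0 => CategoryTheory.Equivalence.refl
  | n + 1 => (npowEquiv E n).trans E

/-- Integer powers of a self-equivalence. -/
def zpowEquiv {C : Type*} [Category C] (E : C ≌ C) : ℤ → (C ≌ C)
  | Int.ofNat n => npowEquiv E n
  | Int.negSucc n => npowEquiv E.symm (n + 1)

/-!
The pairs `(m, n)` with `S ^ m X ≅ X⟦n⟧` form a subgroup of `ℤ × ℤ`. Taking multiples of `(m₁, n₁)`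
and `(m₂, n₂)` with equal first coordinate `k * m₁ * m₂` and applying `S ^ (k * m₁ * m₂)` gives
`Hom(X₁, X₂) ≃ Hom(X₁, X₂⟦k * d⟧)` for every `k : ℤ`. As `d ≠ 0`, the shift `k * d` can be made
arbitrarily negative, where the right-hand side vanishes by boundedness.
-/

open Filter

section Powers

variable {C : Type*} [Category C] (E : C ≌ C)

/-- The isomorphism `E ^ (a + 1) ≅ E ^ a ⋙ E` for the powers of a self-equivalence `E`. -/
def zpowEquivSuccIso : ∀ a : ℤ, (zpowEquiv E (a + 1)).functor ≅ (zpowEquiv E a).functor ⋙ E.functor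
  | Int.ofNat _ => Iso.refl _
  | Int.negSucc 0 => E.counitIso.symm
  | Int.negSucc (n + 1) =>
      Functor.isoWhiskerLeft (npowEquiv E.symm (n + 1)).functor E.counitIso.symm

theorem nonempty_zpowEquiv_add_iso (a b : ℤ) :
    Nonempty ((zpowEquiv E (a + b)).functor ≅
      (zpowEquiv E a).functor ⋙ (zpowEquiv E b).functor) := by
  induction b using Int.induction_on with
  | zero => rw [add_zero]; exact ⟨Iso.refl _⟩
  | succ i ih =>
    obtain ⟨e⟩ := ih
    rw [← add_assoc]
    exact ⟨zpowEquivSuccIso E (a + i) ≪≫ Functor.isoWhiskerRight e E.functor ≪≫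
      Functor.isoWhiskerLeft (zpowEquiv E a).functor (zpowEquivSuccIso E i).symm⟩
  | pred i ih =>
    obtain ⟨b, hb⟩ : ∃ b : ℤ, b + 1 = -i := ⟨-i - 1, by ring⟩
    rw [← hb, ← add_assoc] at ih
    rw [← hb, add_sub_cancel_right]
    obtain ⟨e⟩ := ih
    exact ⟨Functor.fullyFaithfulCancelRight E.functor <| (zpowEquivSuccIso E (a + b)).symm ≪≫ e ≪≫
      Functor.isoWhiskerLeft (zpowEquiv E a).functor (zpowEquivSuccIso E b)⟩

variable [HasShift C ℤ]

/-- Natural powers of a self-equivalence commuting with shifts commute with shifts. -/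
noncomputable instance npowEquiv.commShift [E.functor.CommShift ℤ] :
    ∀ n : ℕ, (npowEquiv E n).functor.CommShift ℤ
  | 0 => inferInstanceAs ((𝟭 C).CommShift ℤ)
  | n + 1 =>
      letI := npowEquiv.commShift n
      inferInstanceAs (((npowEquiv E n).functor ⋙ E.functor).CommShift ℤ)

/-- Integer powers of a self-equivalence commuting with shifts commute with shifts; for negative
exponents the structure comes from the one on the inverse. -/
noncomputable instance zpowEquiv.commShift [E.functor.CommShift ℤ] :
    ∀ m : ℤ, (zpowEquiv E m).functor.CommShift ℤ
  | Int.ofNat n => npowEquiv.commShift E n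
  | Int.negSucc n =>
      letI : E.symm.functor.CommShift ℤ := E.commShiftInverse ℤ
      npowEquiv.commShift E.symm (n + 1)

end Powers

theorem exists_mul_le_of_ne_zero {d : ℤ} (hd : d ≠ 0) (N : ℤ) : ∃ k : ℤ, k * d ≤ N := by
  refine ⟨-|N| * d.sign, ?_⟩
  calc -|N| * d.sign * d = -|N| * |d| := by rw [mul_assoc, Int.sign_mul_self_eq_abs]
    _ ≤ -|N| := by nlinarith [abs_nonneg N, Int.one_le_abs hd]
    _ ≤ N := neg_abs_le N

section ShiftPeriods

variable {C : Type*} [Category C] [HasShift C ℤ] (E : C ≌ C) [E.functor.CommShift ℤ]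

/-- The group of pairs `(m, n)` with `E ^ m X ≅ X⟦n⟧`: the relations between the powers of the
self-equivalence `E` and the shifts that hold, up to isomorphism, at the object `X`. -/
def shiftPeriods (X : C) : AddSubgroup (ℤ × ℤ) where
  carrier := {p | Nonempty ((zpowEquiv E p.1).functor.obj X ≅ X⟦p.2⟧)}
  zero_mem' := ⟨((shiftFunctorZero C ℤ).app X).symm⟩
  add_mem' := by
    rintro ⟨m, n⟩ ⟨m', n'⟩ ⟨e⟩ ⟨e'⟩
    obtain ⟨eadd⟩ := nonempty_zpowEquiv_add_iso E m m'
    exact ⟨eadd.app X ≪≫ (zpowEquiv E m').functor.mapIso e ≪≫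
      ((zpowEquiv E m').functor.commShiftIso n).app X ≪≫ (shiftFunctor C n).mapIso e' ≪≫
      ((shiftFunctorAdd' C n' n (n + n') (add_comm n' n)).app X).symm⟩
  neg_mem' := by
    rintro ⟨m, n⟩ ⟨e⟩
    obtain ⟨eadd⟩ := nonempty_zpowEquiv_add_iso E (-m) m
    rw [neg_add_cancel] at eadd
    let eshift : (zpowEquiv E m).functor.obj (X⟦-n⟧) ≅ X :=
      ((zpowEquiv E m).functor.commShiftIso (-n)).app X ≪≫
        (shiftFunctor C (-n)).mapIso e ≪≫ shiftShiftNeg X n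
    exact ⟨(zpowEquiv E m).functor.preimageIso (eadd.symm.app X ≪≫ eshift.symm)⟩

variable {E} {X Y : C}

theorem nonempty_hom_equiv_hom_shift_sub {m p q : ℤ} (hX : (m, p) ∈ shiftPeriods E X)
    (hY : (m, q) ∈ shiftPeriods E Y) : Nonempty ((X ⟶ Y) ≃ (X ⟶ Y⟦q - p⟧)) := by
  obtain ⟨eX⟩ := hX
  obtain ⟨eY⟩ := hY
  let eshift : Y⟦q⟧ ≅ Y⟦q - p⟧⟦p⟧ := (shiftFunctorAdd' C (q - p) p q (sub_add_cancel q p)).app Y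
  exact ⟨(zpowEquiv E m).fullyFaithfulFunctor.homEquiv.trans <|
    (eX.homCongr (eY ≪≫ eshift)).trans
      (Functor.FullyFaithful.ofFullyFaithful (shiftFunctor C p)).homEquiv.symm⟩

theorem nonempty_hom_equiv_hom_shift_mul {m₁ n₁ m₂ n₂ : ℤ} (hX : (m₁, n₁) ∈ shiftPeriods E X)
    (hY : (m₂, n₂) ∈ shiftPeriods E Y) (k : ℤ) :
    Nonempty ((X ⟶ Y) ≃ (X ⟶ Y⟦k * (m₁ * n₂ - m₂ * n₁)⟧)) := by
  have hX' : (k * m₂ * m₁, k * m₂ * n₁) ∈ shiftPeriods E X := zsmul_mem hX (k * m₂)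
  have hY' : (k * m₂ * m₁, k * m₁ * n₂) ∈ shiftPeriods E Y := by
    rw [mul_right_comm]
    exact zsmul_mem hY (k * m₁)
  have hshift : k * (m₁ * n₂ - m₂ * n₁) = k * m₁ * n₂ - k * m₂ * n₁ := by ring
  rw [hshift]
  exact nonempty_hom_equiv_hom_shift_sub hX' hY'

theorem subsingleton_hom_of_mem_shiftPeriods {m₁ n₁ m₂ n₂ : ℤ}
    (hX : (m₁, n₁) ∈ shiftPeriods E X) (hY : (m₂, n₂) ∈ shiftPeriods E Y)
    (hd : m₁ * n₂ - m₂ * n₁ ≠ 0) (hXY : ∀ᶠ n : ℤ in atBot, Subsingleton (X ⟶ Y⟦n⟧)) :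
    Subsingleton (X ⟶ Y) := by
  obtain ⟨N, hN⟩ := eventually_atBot.1 hXY
  obtain ⟨k, hk⟩ := exists_mul_le_of_ne_zero hd N
  obtain ⟨e⟩ := nonempty_hom_equiv_hom_shift_mul hX hY k
  have := hN _ hk
  exact e.subsingleton

end ShiftPeriods

theorem eventually_subsingleton_hom_shift {C : Type*} [Category C] [Preadditive C] [HasZeroObject C]
    [HasShift C ℤ] [∀ n : ℤ, (shiftFunctor C n).Additive] [Pretriangulated C]
    {t : Triangulated.TStructure C} {X Y : C} (hX : t.minus X) (hY : t.plus Y) :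
    ∀ᶠ n : ℤ in atBot, Subsingleton (X ⟶ Y⟦n⟧) := by
  obtain ⟨b, _⟩ := hX
  obtain ⟨a, _⟩ := hY
  filter_upwards [eventually_lt_atBot (a - b)] with n hn
  have := t.isGE_shift Y a n (a - n)
  exact subsingleton_of_forall_eq 0 fun f => t.zero f b (a - n)

theorem bounded_of_isZero_homology {A : Type*} [Category A] [Abelian A] [HasDerivedCategory A]
    {X : DerivedCategory A}
    (hX : ∃ a b : ℤ, ∀ n : ℤ, (n < a ∨ b < n) →
      IsZero ((DerivedCategory.homologyFunctor A n).obj X)) :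
    DerivedCategory.TStructure.t.bounded X := by
  obtain ⟨a, b, h⟩ := hX
  exact ⟨⟨a, (X.isGE_iff a).2 fun n hn => h n (.inl hn)⟩,
    ⟨b, (X.isLE_iff b).2 fun n hn => h n (.inr hn)⟩⟩

theorem stmt6_general {C : Type*} [Category C] [HasShift C ℤ] (E : C ≌ C) [E.functor.CommShift ℤ]
    (X₁ X₂ : C)
    (h₁₂ : ∀ᶠ n : ℤ in atBot, Subsingleton (X₁ ⟶ X₂⟦n⟧))
    (h₂₁ : ∀ᶠ n : ℤ in atBot, Subsingleton (X₂ ⟶ X₁⟦n⟧))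
    (m₁ m₂ n₁ n₂ : ℤ)
    (h₁ : Nonempty ((zpowEquiv E m₁).functor.obj X₁ ≅ X₁⟦n₁⟧))
    (h₂ : Nonempty ((zpowEquiv E m₂).functor.obj X₂ ≅ X₂⟦n₂⟧))
    (hd : m₁ * n₂ - m₂ * n₁ ≠ 0) :
    Subsingleton (X₁ ⟶ X₂) ∧ Subsingleton (X₂ ⟶ X₁) := by
  have hd' : m₂ * n₁ - m₁ * n₂ ≠ 0 := sub_ne_zero.2 (sub_ne_zero.1 hd).symm
  exact ⟨subsingleton_hom_of_mem_shiftPeriods (E := E) h₁ h₂ hd h₁₂,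
    subsingleton_hom_of_mem_shiftPeriods (E := E) h₂ h₁ hd' h₂₁⟩

/-- Let `A` be an abelian category and `S : D^b(A) → D^b(A)` a triangle
self-equivalence.  Suppose `X₁, X₂` are (cohomologically bounded) objects of the derived
category and `m₁, m₂, n₁, n₂ ∈ ℤ` satisfy `S^{m₁}X₁ ≅ X₁[n₁]`, `S^{m₂}X₂ ≅ X₂[n₂]` and
`d = m₁n₂ − m₂n₁ ≠ 0`.  Then `Hom(X₁, X₂) = 0` and `Hom(X₂, X₁) = 0`. -/
theorem stmt6 (A : Type) [Category A] [Abelian A] [HasDerivedCategory A]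
    (E : DerivedCategory A ≌ DerivedCategory A)
    [E.functor.CommShift ℤ] [E.functor.IsTriangulated]
    (X₁ X₂ : DerivedCategory A)
    (hX₁ : ∃ a b : ℤ, ∀ n : ℤ, (n < a ∨ b < n) →
      IsZero ((DerivedCategory.homologyFunctor A n).obj X₁))
    (hX₂ : ∃ a b : ℤ, ∀ n : ℤ, (n < a ∨ b < n) →
      IsZero ((DerivedCategory.homologyFunctor A n).obj X₂))
    (m₁ m₂ n₁ n₂ : ℤ)
    (h₁ : Nonempty ((zpowEquiv E m₁).functor.obj X₁ ≅ X₁⟦n₁⟧))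
    (h₂ : Nonempty ((zpowEquiv E m₂).functor.obj X₂ ≅ X₂⟦n₂⟧))
    (hd : m₁ * n₂ - m₂ * n₁ ≠ 0) :
    (∀ f : X₁ ⟶ X₂, f = 0) ∧ (∀ f : X₂ ⟶ X₁, f = 0) := by
  obtain ⟨hplus₁, hminus₁⟩ := bounded_of_isZero_homology hX₁
  obtain ⟨hplus₂, hminus₂⟩ := bounded_of_isZero_homology hX₂
  obtain ⟨_, _⟩ := stmt6_general E X₁ X₂ (eventually_subsingleton_hom_shift hminus₁ hplus₂)
    (eventually_subsingleton_hom_shift hminus₂ hplus₁) m₁ m₂ n₁ n₂ h₁ h₂ hd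
  exact ⟨fun f => Subsingleton.elim f 0, fun f => Subsingleton.elim f 0⟩
end
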